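/- There exists a constant C > 0 such that for every T > 0 and every smooth solution u of the 1-dimensional Schrödinger flow with Neumann boundary conditions on [0,T], for all t ∈ [0,T]: (d/dt) ∫₀¹ |∂_t∂_x u(x,t)|² dx ≤ C ( ‖u(·,t)‖²_{H²} + ‖∂_t u(·,t)‖²_{L²} + 1 )³ ( ∫₀¹ |∂_t∂_x u(x,t)|² dx + 1 ). -/

import Mathlib

open MeasureTheory Set

noncomputable section

abbrev E3 := EuclideanSpace ℝ (Fin 3)

/-- The cross product on `EuclideanSpace ℝ (Fin 3)`. -/
def cross3 (a b : E3) : E3 :=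
  (WithLp.equiv 2 (Fin 3 → ℝ)).symm
    (crossProduct ((WithLp.equiv 2 (Fin 3 → ℝ)) a) ((WithLp.equiv 2 (Fin 3 → ℝ)) b))

/-- Partial derivative in the space variable of `u = u x t`. -/
def pdx (u : ℝ → ℝ → E3) : ℝ → ℝ → E3 := fun x t => deriv (fun y => u y t) x

/-- Partial derivative in the time variable of `u = u x t`. -/
def pdt (u : ℝ → ℝ → E3) : ℝ → ℝ → E3 := fun x t => deriv (fun s => u x s) t

/-- `u` is a smooth solution of the 1-dimensional Schrödinger flow with Neumann
boundary conditions on `[0,1] × [0,T]`. -/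
def IsSol (T : ℝ) (u : ℝ → ℝ → E3) : Prop :=
  ContDiff ℝ (⊤ : ℕ∞) (fun p : ℝ × ℝ => u p.1 p.2) ∧
  (∀ x ∈ Icc (0:ℝ) 1, ∀ t ∈ Icc (0:ℝ) T, ‖u x t‖ = 1) ∧
  (∀ x ∈ Icc (0:ℝ) 1, ∀ t ∈ Icc (0:ℝ) T, pdt u x t = cross3 (u x t) (pdx (pdx u) x t)) ∧
  (∀ t ∈ Icc (0:ℝ) T, pdx u 0 t = 0 ∧ pdx u 1 t = 0)

/-- Squared `L²` norm on `[0,1]`. -/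
def L2sq (f : ℝ → E3) : ℝ := ∫ x in (0:ℝ)..1, ‖f x‖ ^ 2

/-- Squared `H^k` Sobolev norm on `[0,1]`. -/
def Hsq (k : ℕ) (f : ℝ → E3) : ℝ :=
  ∑ j ∈ Finset.range (k + 1), ∫ x in (0:ℝ)..1, ‖deriv^[j] f x‖ ^ 2

def Sm (w : ℝ → ℝ → E3) : Prop := ContDiff ℝ (⊤ : ℕ∞) (fun p : ℝ × ℝ => w p.1 p.2)

lemma Sm.hdx {w : ℝ → ℝ → E3} (h : Sm w) (x t : ℝ) :
    HasDerivAt (fun y => w y t) (fderiv ℝ (fun p : ℝ × ℝ => w p.1 p.2) (x, t) (1, 0)) x := by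
  have h1 : HasFDerivAt (fun p : ℝ × ℝ => w p.1 p.2) _ (x, t) :=
    (ContDiff.differentiable h (by simp) (x, t)).hasFDerivAt
  have h2 : HasDerivAt (fun y : ℝ => (y, t)) ((1:ℝ), (0:ℝ)) x :=
    (hasDerivAt_id x).prodMk (hasDerivAt_const x t)
  exact h1.comp_hasDerivAt x h2

lemma Sm.hdt {w : ℝ → ℝ → E3} (h : Sm w) (x t : ℝ) :
    HasDerivAt (fun s => w x s) (fderiv ℝ (fun p : ℝ × ℝ => w p.1 p.2) (x, t) (0, 1)) t := by
  have h1 : HasFDerivAt (fun p : ℝ × ℝ => w p.1 p.2) _ (x, t) :=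
    (ContDiff.differentiable h (by simp) (x, t)).hasFDerivAt
  have h2 : HasDerivAt (fun s : ℝ => (x, s)) ((0:ℝ), (1:ℝ)) t :=
    (hasDerivAt_const t x).prodMk (hasDerivAt_id t)
  exact h1.comp_hasDerivAt t h2

lemma Sm.dx {w : ℝ → ℝ → E3} (h : Sm w) (x t : ℝ) :
    HasDerivAt (fun y => w y t) (pdx w x t) x := by
  have := h.hdx x t
  exact this.differentiableAt.hasDerivAt

lemma Sm.dt {w : ℝ → ℝ → E3} (h : Sm w) (x t : ℝ) :
    HasDerivAt (fun s => w x s) (pdt w x t) t :=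
  (h.hdt x t).differentiableAt.hasDerivAt

lemma Sm.pdx_eq {w : ℝ → ℝ → E3} (h : Sm w) (x t : ℝ) :
    pdx w x t = fderiv ℝ (fun p : ℝ × ℝ => w p.1 p.2) (x, t) (1, 0) := (h.hdx x t).deriv

lemma Sm.pdt_eq {w : ℝ → ℝ → E3} (h : Sm w) (x t : ℝ) :
    pdt w x t = fderiv ℝ (fun p : ℝ × ℝ => w p.1 p.2) (x, t) (0, 1) := (h.hdt x t).deriv

lemma Sm.fd {w : ℝ → ℝ → E3} (h : Sm w) :
    ContDiff ℝ (⊤ : ℕ∞) (fderiv ℝ (fun p : ℝ × ℝ => w p.1 p.2)) :=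
  ContDiff.fderiv_right h (by simp)

lemma Sm.x {w : ℝ → ℝ → E3} (h : Sm w) : Sm (pdx w) := by
  have : (fun p : ℝ × ℝ => pdx w p.1 p.2)
      = fun p => fderiv ℝ (fun p : ℝ × ℝ => w p.1 p.2) p (1, 0) := by
    funext p; exact h.pdx_eq p.1 p.2
  unfold Sm
  rw [this]
  exact h.fd.clm_apply contDiff_const

lemma Sm.t {w : ℝ → ℝ → E3} (h : Sm w) : Sm (pdt w) := by
  have : (fun p : ℝ × ℝ => pdt w p.1 p.2)
      = fun p => fderiv ℝ (fun p : ℝ × ℝ => w p.1 p.2) p (0, 1) := by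
    funext p; exact h.pdt_eq p.1 p.2
  unfold Sm
  rw [this]
  exact h.fd.clm_apply contDiff_const

lemma Sm.comm {w : ℝ → ℝ → E3} (h : Sm w) : pdt (pdx w) = pdx (pdt w) := by
  funext x t
  rw [h.x.pdt_eq, h.t.pdx_eq]
  have e1 : (fun p : ℝ × ℝ => pdx w p.1 p.2)
      = fun p => fderiv ℝ (fun p : ℝ × ℝ => w p.1 p.2) p (1, 0) := by
    funext p; exact h.pdx_eq p.1 p.2
  have e2 : (fun p : ℝ × ℝ => pdt w p.1 p.2)
      = fun p => fderiv ℝ (fun p : ℝ × ℝ => w p.1 p.2) p (0, 1) := by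
    funext p; exact h.pdt_eq p.1 p.2
  have hd : DifferentiableAt ℝ (fderiv ℝ (fun p : ℝ × ℝ => w p.1 p.2)) (x, t) :=
    (h.fd.differentiable (by simp)) _
  have hs : IsSymmSndFDerivAt ℝ (fun p : ℝ × ℝ => w p.1 p.2) (x, t) :=
    (ContDiff.contDiffAt h).isSymmSndFDerivAt (by
      simp only [minSmoothness_of_isRCLikeNormedField]; exact WithTop.coe_le_coe.2 (le_top : (2:ℕ∞) ≤ ⊤))
  rw [e1, e2, fderiv_clm_apply hd (by fun_prop), fderiv_clm_apply hd (by fun_prop)]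
  simpa using hs.eq (0, 1) (1, 0)

lemma Sm.cont {w : ℝ → ℝ → E3} (h : Sm w) : Continuous (fun p : ℝ × ℝ => w p.1 p.2) :=
  ContDiff.continuous h

lemma Sm.cx {w : ℝ → ℝ → E3} (h : Sm w) (t : ℝ) : Continuous (fun x => w x t) :=
  h.cont.comp (by fun_prop : Continuous (fun x : ℝ => (x, t)))

/-- cross product as a continuous bilinear map -/
def crossL : E3 →L[ℝ] E3 →L[ℝ] E3 :=
  (LinearMap.mk₂ ℝ cross3
    (by intro a b c; simp [cross3]; )
    (by intro a b c; simp [cross3])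
    (by intro a b c; simp [cross3])
    (by intro a b c; simp [cross3])).toContinuousBilinearMap

lemma crossL_apply (a b : E3) : crossL a b = cross3 a b := rfl

lemma cross_hd {f g : ℝ → E3} {f' g' : E3} {x : ℝ} (hf : HasDerivAt f f' x)
    (hg : HasDerivAt g g' x) :
    HasDerivAt (fun y => cross3 (f y) (g y)) (cross3 (f x) g' + cross3 f' (g x)) x :=
  crossL.hasDerivAt_of_bilinear (fun _ => hf) (fun _ => hg)

lemma cross_cont {X : Type*} [TopologicalSpace X] {f g : X → E3} (hf : Continuous f)
    (hg : Continuous g) : Continuous (fun y => cross3 (f y) (g y)) := by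
  have : Continuous (fun y => crossL (f y) (g y)) := by fun_prop
  exact this

lemma inner3 (a b : E3) : inner ℝ a b = a 0 * b 0 + a 1 * b 1 + a 2 * b 2 := by
  simp [PiLp.inner_apply, Fin.sum_univ_three]; ring

lemma cross3_0 (a b : E3) : cross3 a b 0 = a 1 * b 2 - a 2 * b 1 := by
  simp [cross3, cross_apply]
lemma cross3_1 (a b : E3) : cross3 a b 1 = a 2 * b 0 - a 0 * b 2 := by
  simp [cross3, cross_apply]
lemma cross3_2 (a b : E3) : cross3 a b 2 = a 0 * b 1 - a 1 * b 0 := by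
  simp [cross3, cross_apply]

lemma triple_self (a b : E3) : inner ℝ a (cross3 a b) = 0 := by
  rw [inner3, cross3_0, cross3_1, cross3_2]; ring

lemma triple_self' (a b : E3) : inner ℝ a (cross3 b a) = 0 := by
  rw [inner3, cross3_0, cross3_1, cross3_2]; ring

lemma norm_cross_le (a b : E3) : ‖cross3 a b‖ ≤ ‖a‖ * ‖b‖ := by
  apply abs_le_of_sq_le_sq' _ (by positivity) |>.2
  have h1 := real_inner_self_eq_norm_sq (cross3 a b)
  have h2 := real_inner_self_eq_norm_sq a
  have h3 := real_inner_self_eq_norm_sq b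
  rw [mul_pow, ← h1, ← h2, ← h3]
  simp only [inner3, cross3_0, cross3_1, cross3_2]
  nlinarith [sq_nonneg (a 0 * b 0 + a 1 * b 1 + a 2 * b 2)]

lemma abs_triple_le (a b c : E3) : |inner ℝ a (cross3 b c)| ≤ ‖a‖ * ‖b‖ * ‖c‖ := by
  refine (abs_real_inner_le_norm _ _).trans ?_
  rw [mul_assoc]
  exact mul_le_mul_of_nonneg_left (norm_cross_le _ _) (norm_nonneg _)

lemma deriv_eq_of_eqOn {F : Type*} [NormedAddCommGroup F] [NormedSpace ℝ F]
    {f g : ℝ → F} {f' g' : F} {a b t : ℝ} (hab : a < b)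
    (ht : t ∈ Icc a b) (hf : HasDerivAt f f' t) (hg : HasDerivAt g g' t)
    (h : ∀ s ∈ Icc a b, f s = g s) : f' = g' := by
  have h1 : HasDerivWithinAt f f' (Icc a b) t := hf.hasDerivWithinAt
  have h2 : HasDerivWithinAt f g' (Icc a b) t :=
    hg.hasDerivWithinAt.congr h (h t ht)
  exact (uniqueDiffOn_Icc hab t ht).eq_deriv _ h1 h2

/-- Sobolev -/
lemma sob {f f' : ℝ → E3} (hd : ∀ x, HasDerivAt f (f' x) x) (hc : Continuous f')
    {x : ℝ} (hx : x ∈ Icc (0:ℝ) 1) :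
    ‖f x‖ ^ 2 ≤ 2 * (∫ y in (0:ℝ)..1, ‖f y‖ ^ 2) + ∫ y in (0:ℝ)..1, ‖f' y‖ ^ 2 := by
  have hcf : Continuous f := continuous_iff_continuousAt.2 fun x => (hd x).continuousAt
  set K := (∫ y in (0:ℝ)..1, ‖f y‖ ^ 2) + ∫ y in (0:ℝ)..1, ‖f' y‖ ^ 2 with hK
  have hK' : K = ∫ y in (0:ℝ)..1, (‖f y‖ ^ 2 + ‖f' y‖ ^ 2) := by
    rw [intervalIntegral.integral_add]
    · exact (by fun_prop : Continuous fun y => ‖f y‖ ^ 2).intervalIntegrable _ _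
    · exact (by fun_prop : Continuous fun y => ‖f' y‖ ^ 2).intervalIntegrable _ _
  have key : ∀ y ∈ Icc (0:ℝ) 1, ‖f x‖ ^ 2 ≤ ‖f y‖ ^ 2 + K := by
    intro y hy
    have e : ∫ z in y..x, 2 * inner ℝ (f z) (f' z) = ‖f x‖ ^ 2 - ‖f y‖ ^ 2 := by
      apply intervalIntegral.integral_eq_sub_of_hasDerivAt
      · intro z _
        exact (hd z).norm_sq
      · exact (by fun_prop : Continuous fun z => 2 * inner ℝ (f z) (f' z)).intervalIntegrable _ _
    have hle : |∫ z in y..x, 2 * inner ℝ (f z) (f' z)| ≤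
        |∫ z in y..x, (‖f z‖ ^ 2 + ‖f' z‖ ^ 2)| := by
      rw [← Real.norm_eq_abs]
      apply intervalIntegral.norm_integral_le_abs_of_norm_le
      · refine Filter.Eventually.of_forall fun z => ?_
        rw [Real.norm_eq_abs, abs_mul, abs_two]
        have := abs_real_inner_le_norm (f z) (f' z)
        nlinarith [sq_nonneg (‖f z‖ - ‖f' z‖)]
      · exact (by fun_prop : Continuous fun z => ‖f z‖ ^ 2 + ‖f' z‖ ^ 2).intervalIntegrable _ _
    have h2 : |∫ z in y..x, (‖f z‖ ^ 2 + ‖f' z‖ ^ 2)| ≤ K := by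
      rw [hK']
      have := intervalIntegral.abs_integral_mono_interval (μ := volume) (a := y) (b := x) (c := 0) (d := 1)
        (f := fun z => ‖f z‖ ^ 2 + ‖f' z‖ ^ 2)
        (by
          rw [uIoc_of_le zero_le_one]
          intro z hz
          rw [mem_uIoc] at hz
          rcases hz with hz | hz
          · exact ⟨lt_of_le_of_lt hy.1 hz.1, hz.2.trans hx.2⟩
          · exact ⟨lt_of_le_of_lt hx.1 hz.1, hz.2.trans hy.2⟩)
        (Filter.Eventually.of_forall fun z => by simp only [Pi.zero_apply]; positivity)
        ((by fun_prop : Continuous fun z => ‖f z‖ ^ 2 + ‖f' z‖ ^ 2).intervalIntegrable _ _)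
      refine this.trans (le_of_eq (abs_of_nonneg ?_))
      exact intervalIntegral.integral_nonneg zero_le_one fun z _ => by positivity
    have := le_abs_self (∫ z in y..x, 2 * inner ℝ (f z) (f' z))
    linarith
  have := intervalIntegral.integral_mono_on (μ := volume) (a := 0) (b := 1) (f := fun _ => ‖f x‖ ^ 2)
    (g := fun y => ‖f y‖ ^ 2 + K) zero_le_one
    (continuous_const.intervalIntegrable _ _)
    ((by fun_prop : Continuous fun y => ‖f y‖ ^ 2 + K).intervalIntegrable _ _) key
  rw [intervalIntegral.integral_add
    ((by fun_prop : Continuous fun y => ‖f y‖ ^ 2).intervalIntegrable _ _)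
    (continuous_const.intervalIntegrable _ _)] at this
  simp at this
  linarith

/-- differentiation under the integral -/
lemma deriv_energy {w : ℝ → ℝ → E3} (h : Sm w) (t : ℝ) :
    HasDerivAt (fun s => ∫ x in (0:ℝ)..1, ‖w x s‖ ^ 2)
      (∫ x in (0:ℝ)..1, 2 * inner ℝ (w x t) (pdt w x t)) t := by
  have hc : Continuous (fun p : ℝ × ℝ => 2 * inner ℝ (w p.1 p.2) (pdt w p.1 p.2)) := by
    have h1 := h.cont
    have h2 := h.t.cont
    exact continuous_const.mul (h1.inner h2)
  obtain ⟨B, hB⟩ := ((isCompact_Icc (a := (0:ℝ)) (b := 1)).prod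
    (isCompact_Icc (a := t - 1) (b := t + 1))).exists_bound_of_continuousOn hc.continuousOn
  refine (intervalIntegral.hasDerivAt_integral_of_dominated_loc_of_deriv_le
    (F := fun s x => ‖w x s‖ ^ 2) (F' := fun s x => 2 * inner ℝ (w x s) (pdt w x s))
    (bound := fun _ => B)
    (s := Icc (t - 1) (t + 1)) (Icc_mem_nhds (by linarith) (by linarith)) ?_ ?_ ?_ ?_ ?_ ?_).2
  · refine Filter.Eventually.of_forall fun s => ?_
    exact (((h.cx s).norm).pow 2).aestronglyMeasurable
  · exact (((h.cx t).norm).pow 2).intervalIntegrable _ _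
  · exact (continuous_const.mul ((h.cx t).inner (h.t.cx t))).aestronglyMeasurable
  · refine Filter.Eventually.of_forall fun x hx s hs => ?_
    rw [uIoc_of_le zero_le_one] at hx
    exact hB (x, s) ⟨⟨hx.1.le, hx.2⟩, hs⟩
  · exact continuous_const.intervalIntegrable _ _
  · refine Filter.Eventually.of_forall fun x _ s _ => ?_
    exact (h.dt x s).norm_sq

/-- Pointwise estimate. Here `a = u`, `b = u_x`, `c = u_xx`, `d = u_xxx`, `v = u_t`, `w = u_tx`. -/
lemma pointwise {a b c d v w : E3} {A E : ℝ}
    (ha : ‖a‖ = 1) (hav : inner ℝ a v = 0) (hw : inner ℝ b v + inner ℝ a w = 0)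
    (hd : d = -(cross3 a w + cross3 b v) - ((‖b‖ ^ 2) • b + (2 * inner ℝ b c) • a))
    (hb : ‖b‖ ^ 2 ≤ 2 * A) (hv : ‖v‖ ^ 2 ≤ 2 * A + E) :
    inner ℝ w (cross3 v d) ≤ 5 * A * ‖w‖ ^ 2 + (2 * A + E + 2 * A ^ 2) * ‖v‖ ^ 2
      + (2 * A + E) * ‖c‖ ^ 2 := by
  have e : inner ℝ w (cross3 v d) = - inner ℝ w (cross3 v (cross3 b v))
      + inner ℝ v b * inner ℝ v w - 2 * inner ℝ b c * inner ℝ w (cross3 v a)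
      - ‖b‖ ^ 2 * inner ℝ w (cross3 v b) := by
    subst hd
    have h1 : inner ℝ v b = - inner ℝ a w := by rw [real_inner_comm]; linarith
    rw [h1]
    generalize ‖b‖ ^ 2 = r
    generalize inner ℝ b c = k
    simp only [inner3] at *
    simp only [cross3_0, cross3_1, cross3_2, PiLp.sub_apply, PiLp.neg_apply, PiLp.add_apply,
      PiLp.smul_apply, smul_eq_mul]
    linear_combination (w 0 * w 0 + w 1 * w 1 + w 2 * w 2) * hav
  have b1 : - inner ℝ w (cross3 v (cross3 b v)) ≤ ‖w‖ * ‖v‖ ^ 2 * ‖b‖ := by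
    have h1 := abs_triple_le w v (cross3 b v)
    have h2 := mul_le_mul_of_nonneg_left (norm_cross_le b v) (by positivity : 0 ≤ ‖w‖ * ‖v‖)
    have := neg_abs_le (inner ℝ w (cross3 v (cross3 b v)))
    nlinarith
  have b2 : inner ℝ v b * inner ℝ v w ≤ ‖w‖ * ‖v‖ ^ 2 * ‖b‖ := by
    have h1 := abs_real_inner_le_norm v b
    have h2 := abs_real_inner_le_norm v w
    have h3 := mul_le_mul h1 h2 (abs_nonneg _) (by positivity)
    rw [← abs_mul] at h3
    have := le_abs_self (inner ℝ v b * inner ℝ v w)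
    nlinarith
  have b3 : - (2 * inner ℝ b c * inner ℝ w (cross3 v a)) ≤ 2 * (‖b‖ * ‖c‖ * (‖w‖ * ‖v‖)) := by
    have h1 := abs_real_inner_le_norm b c
    have h2 := abs_triple_le w v a
    rw [ha, mul_one] at h2
    have h3 := mul_le_mul h1 h2 (abs_nonneg _) (by positivity)
    rw [← abs_mul] at h3
    have := neg_abs_le (inner ℝ b c * inner ℝ w (cross3 v a))
    nlinarith
  have b4 : - (‖b‖ ^ 2 * inner ℝ w (cross3 v b)) ≤ ‖b‖ ^ 2 * (‖w‖ * ‖v‖ * ‖b‖) := by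
    have h2 := abs_triple_le w v b
    have := neg_abs_le (inner ℝ w (cross3 v b))
    have := mul_le_mul_of_nonneg_left (by linarith : - inner ℝ w (cross3 v b) ≤ ‖w‖ * ‖v‖ * ‖b‖)
      (by positivity : 0 ≤ ‖b‖ ^ 2)
    linarith
  rw [e]
  generalize ‖w‖ = p at *
  generalize ‖v‖ = q at *
  generalize ‖b‖ = r at *
  generalize ‖c‖ = s at *
  have c1 : r ^ 2 * p ^ 2 ≤ 2 * A * p ^ 2 := mul_le_mul_of_nonneg_right hb (sq_nonneg _)
  have c2 : q ^ 2 * q ^ 2 ≤ (2 * A + E) * q ^ 2 := mul_le_mul_of_nonneg_right hv (sq_nonneg _)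
  have c3 : q ^ 2 * s ^ 2 ≤ (2 * A + E) * s ^ 2 := mul_le_mul_of_nonneg_right hv (sq_nonneg _)
  have c4 : (r ^ 2) ^ 2 * q ^ 2 ≤ (2 * A) ^ 2 * q ^ 2 :=
    mul_le_mul_of_nonneg_right (pow_le_pow_left₀ (sq_nonneg _) hb 2) (sq_nonneg _)
  have d1 : 2 * (p * q ^ 2 * r) ≤ r ^ 2 * p ^ 2 + q ^ 2 * q ^ 2 := by
    nlinarith [sq_nonneg (r * p - q ^ 2)]
  have d2 : 2 * (r * s * (p * q)) ≤ r ^ 2 * p ^ 2 + q ^ 2 * s ^ 2 := by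
    nlinarith [sq_nonneg (r * p - q * s)]
  have d3 : 2 * (r ^ 2 * (p * q * r)) ≤ r ^ 2 * p ^ 2 + (r ^ 2) ^ 2 * q ^ 2 := by
    nlinarith [sq_nonneg (r * p - r ^ 2 * q)]
  linarith

theorem utx_differential_inequality_schrodinger_flow :
    ∃ C > (0:ℝ), ∀ T > (0:ℝ), ∀ u : ℝ → ℝ → E3, IsSol T u →
      ∀ t ∈ Icc (0:ℝ) T,
        deriv (fun s => ∫ x in (0:ℝ)..1, ‖pdt (pdx u) x s‖ ^ 2) t
          ≤ C * (Hsq 2 (fun x => u x t) + L2sq (fun x => pdt u x t) + 1) ^ 3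
            * ((∫ x in (0:ℝ)..1, ‖pdt (pdx u) x t‖ ^ 2) + 1) := by
  refine ⟨26, by norm_num, ?_⟩
  intro T hT u hu t ht
  obtain ⟨hs, hn, heq, hbd⟩ := hu
  have hs : Sm u := hs
  have h01 : (0:ℝ) < 1 := one_pos
  -- algebraic facts on the box
  have f1 : ∀ x ∈ Icc (0:ℝ) 1, ∀ t ∈ Icc (0:ℝ) T, inner ℝ (u x t) (pdx u x t) = 0 := by
    intro x hx t ht
    have := deriv_eq_of_eqOn h01 hx (hs.dx x t).norm_sq (hasDerivAt_const x (1:ℝ))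
      (fun y hy => by simp [hn y hy t ht])
    linarith
  have f2 : ∀ x ∈ Icc (0:ℝ) 1, ∀ t ∈ Icc (0:ℝ) T,
      inner ℝ (u x t) (pdx (pdx u) x t) + ‖pdx u x t‖ ^ 2 = 0 := by
    intro x hx t ht
    have := deriv_eq_of_eqOn h01 hx ((hs.dx x t).inner ℝ (hs.x.dx x t)) (hasDerivAt_const x (0:ℝ))
      (fun y hy => f1 y hy t ht)
    rwa [real_inner_self_eq_norm_sq] at this
  have f3 : ∀ x ∈ Icc (0:ℝ) 1, ∀ t ∈ Icc (0:ℝ) T, inner ℝ (u x t) (pdt u x t) = 0 := by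
    intro x hx t ht
    rw [heq x hx t ht]; exact triple_self _ _
  have f4 : ∀ x ∈ Icc (0:ℝ) 1, ∀ t ∈ Icc (0:ℝ) T,
      inner ℝ (pdx u x t) (pdt u x t) + inner ℝ (u x t) (pdx (pdt u) x t) = 0 := by
    intro x hx t ht
    have := deriv_eq_of_eqOn h01 hx ((hs.dx x t).inner ℝ (hs.t.dx x t)) (hasDerivAt_const x (0:ℝ))
      (fun y hy => f3 y hy t ht)
    linarith
  have f5 : ∀ x ∈ Icc (0:ℝ) 1, ∀ t ∈ Icc (0:ℝ) T,
      pdx (pdx u) x t = -(cross3 (u x t) (pdt u x t)) - (‖pdx u x t‖ ^ 2) • u x t := by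
    intro x hx t ht
    have h2 := f2 x hx t ht
    have h0 : ‖u x t‖ ^ 2 = 1 := by rw [hn x hx t ht]; norm_num
    rw [heq x hx t ht]
    have h3 : ‖pdx u x t‖ ^ 2 = - inner ℝ (u x t) (pdx (pdx u) x t) := by linarith
    rw [h3]
    rw [← real_inner_self_eq_norm_sq] at h0
    generalize u x t = a at *
    generalize pdx (pdx u) x t = c at *
    simp only [inner3] at *
    ext i
    fin_cases i
    · simp [cross3_0, cross3_1, cross3_2]
      linear_combination (-c 0) * h0
    · simp [cross3_0, cross3_1, cross3_2]
      linear_combination (-c 1) * h0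
    · simp [cross3_0, cross3_1, cross3_2]
      linear_combination (-c 2) * h0
  have f6 : ∀ x ∈ Icc (0:ℝ) 1, ∀ t ∈ Icc (0:ℝ) T,
      pdx (pdx (pdx u)) x t = -(cross3 (u x t) (pdx (pdt u) x t) + cross3 (pdx u x t) (pdt u x t))
        - ((‖pdx u x t‖ ^ 2) • pdx u x t
          + (2 * inner ℝ (pdx u x t) (pdx (pdx u) x t)) • u x t) := by
    intro x hx t ht
    exact deriv_eq_of_eqOn h01 hx (hs.x.x.dx x t)
      ((cross_hd (hs.dx x t) (hs.t.dx x t)).neg.sub ((hs.x.dx x t).norm_sq.smul (hs.dx x t)))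
      (fun y hy => f5 y hy t ht)
  have f7 : ∀ x ∈ Icc (0:ℝ) 1, ∀ t ∈ Icc (0:ℝ) T,
      pdt (pdt u) x t = cross3 (u x t) (pdx (pdx (pdt u)) x t)
        + cross3 (pdt u x t) (pdx (pdx u) x t) := by
    intro x hx t ht
    have := deriv_eq_of_eqOn hT ht (hs.t.dt x t) (cross_hd (hs.dt x t) (hs.x.x.dt x t))
      (fun s hs' => heq x hx s hs')
    rwa [hs.x.comm, hs.comm] at this
  have f8 : pdx (pdt u) 0 t = 0 ∧ pdx (pdt u) 1 t = 0 := by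
    rw [← hs.comm]
    exact ⟨deriv_eq_of_eqOn hT ht (hs.x.dt 0 t) (hasDerivAt_const t 0) (fun s h => (hbd s h).1),
      deriv_eq_of_eqOn hT ht (hs.x.dt 1 t) (hasDerivAt_const t 0) (fun s h => (hbd s h).2)⟩
  rw [hs.comm, (deriv_energy hs.t.x t).deriv, hs.t.comm]
  set v := pdt u with hv
  -- integration by parts
  have ibp : ∫ x in (0:ℝ)..1, (inner ℝ (pdx v x t) (pdx (pdt v) x t)
      - inner ℝ (pdx v x t) (cross3 (v x t) (pdx (pdx (pdx u)) x t))) = 0 := by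
    have hG : ∀ x, HasDerivAt (fun y => inner ℝ (pdx v y t)
        (pdt v y t - cross3 (v y t) (pdx (pdx u) y t))) _ x := fun x =>
      (hs.t.x.dx x t).inner ℝ
        ((hs.t.t.dx x t).sub (cross_hd (hs.t.dx x t) (hs.x.x.dx x t)))
    have := intervalIntegral.integral_eq_sub_of_hasDerivAt (a := 0) (b := 1)
      (fun x _ => hG x) (by
        apply Continuous.intervalIntegrable
        have k1 := hs.t.x.cx t
        have k2 := hs.t.t.x.cx t
        have k3 := cross_cont (hs.t.cx t) (hs.x.x.x.cx t)
        have k4 := cross_cont (hs.t.x.cx t) (hs.x.x.cx t)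
        have k5 := hs.t.x.x.cx t
        have k6 := hs.t.t.cx t
        have k7 := cross_cont (hs.t.cx t) (hs.x.x.cx t)
        exact (k1.inner (k2.sub (k3.add k4))).add (k5.inner (k6.sub k7)))
    rw [f8.1, f8.2] at this
    simp only [inner_zero_left, sub_zero] at this
    refine Eq.trans ?_ this
    apply intervalIntegral.integral_congr
    intro x hx
    rw [uIcc_of_le zero_le_one] at hx
    have h7 := f7 x hx t ht
    simp only [← hv]
    rw [h7, add_sub_cancel_right, triple_self', inner_sub_right, inner_add_right, triple_self]
    ring
  have cw := hs.t.x.cx t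
  have cv := hs.t.cx t
  have cc := hs.x.x.cx t
  have i1 := (cw.inner (𝕜 := ℝ) (hs.t.t.x.cx t)).intervalIntegrable (μ := volume) 0 1
  have i2 := (cw.inner (𝕜 := ℝ) (cross_cont cv (hs.x.x.x.cx t))).intervalIntegrable (μ := volume) 0 1
  rw [intervalIntegral.integral_sub i1 i2] at ibp
  rw [intervalIntegral.integral_const_mul]
  -- quantities
  have hH : Hsq 2 (fun x => u x t) = (∫ x in (0:ℝ)..1, ‖u x t‖ ^ 2)
      + (∫ x in (0:ℝ)..1, ‖pdx u x t‖ ^ 2) + ∫ x in (0:ℝ)..1, ‖pdx (pdx u) x t‖ ^ 2 := by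
    simp only [Hsq, Finset.sum_range_succ, Finset.sum_range_zero, zero_add]
    rfl
  have nn : ∀ f : ℝ → E3, 0 ≤ ∫ x in (0:ℝ)..1, ‖f x‖ ^ 2 := fun f =>
    intervalIntegral.integral_nonneg zero_le_one fun z _ => by positivity
  have n0 := nn (fun x => u x t)
  have n1 := nn (fun x => pdx u x t)
  have n2 := nn (fun x => pdx (pdx u) x t)
  have n3 := nn (fun x => v x t)
  have n4 := nn (fun x => pdx v x t)
  set A := Hsq 2 (fun x => u x t) + L2sq (fun x => v x t) + 1 with hA
  have hA' : A = (∫ x in (0:ℝ)..1, ‖u x t‖ ^ 2)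
      + (∫ x in (0:ℝ)..1, ‖pdx u x t‖ ^ 2) + (∫ x in (0:ℝ)..1, ‖pdx (pdx u) x t‖ ^ 2)
      + (∫ x in (0:ℝ)..1, ‖v x t‖ ^ 2) + 1 := by rw [hA, hH, L2sq]
  set E := ∫ x in (0:ℝ)..1, ‖pdx v x t‖ ^ 2 with hE
  have main : ∫ x in (0:ℝ)..1, inner ℝ (pdx v x t) (cross3 (v x t) (pdx (pdx (pdx u)) x t)) ≤
      ∫ x in (0:ℝ)..1, (5 * A * ‖pdx v x t‖ ^ 2 + (2 * A + E + 2 * A ^ 2) * ‖v x t‖ ^ 2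
      + (2 * A + E) * ‖pdx (pdx u) x t‖ ^ 2) := by
    apply intervalIntegral.integral_mono_on zero_le_one i2
    · apply Continuous.intervalIntegrable; fun_prop
    · intro x hx
      refine pointwise (hn x hx t ht) (f3 x hx t ht) (f4 x hx t ht) (f6 x hx t ht) ?_ ?_
      · have := sob (fun x => hs.x.dx x t) cc hx
        linarith
      · have := sob (fun x => hs.t.dx x t) cw hx
        linarith
  rw [intervalIntegral.integral_add (by apply Continuous.intervalIntegrable; fun_prop)
    (by apply Continuous.intervalIntegrable; fun_prop),
    intervalIntegral.integral_add (by apply Continuous.intervalIntegrable; fun_prop)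
    (by apply Continuous.intervalIntegrable; fun_prop),
    intervalIntegral.integral_const_mul, intervalIntegral.integral_const_mul,
    intervalIntegral.integral_const_mul, ← hE] at main
  set V := ∫ x in (0:ℝ)..1, ‖v x t‖ ^ 2
  set U := ∫ x in (0:ℝ)..1, ‖pdx (pdx u) x t‖ ^ 2
  have hA1 : 1 ≤ A := by linarith
  have hV : V ≤ A := by linarith
  have hU : U ≤ A := by linarith
  have m1 : (2 * A + E + 2 * A ^ 2) * V ≤ (2 * A + E + 2 * A ^ 2) * A :=
    mul_le_mul_of_nonneg_left hV (by positivity)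
  have m2 : (2 * A + E) * U ≤ (2 * A + E) * A :=
    mul_le_mul_of_nonneg_left hU (by positivity)
  have p1 : A ≤ A ^ 3 := by nlinarith [sq_nonneg A]
  have p2 : A ^ 2 ≤ A ^ 3 := by nlinarith [sq_nonneg A]
  have p3 : A * E ≤ A ^ 3 * E := mul_le_mul_of_nonneg_right p1 n4
  have p4 : 0 ≤ A ^ 3 * E := by positivity
  nlinarith

end
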